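/- Let q = 2^n. The number of N ∈ F_{q³} with N ∉ {0,1}, N^{q²+q+1} + N + N^q + N^{q²} ≠ 0 (automatically satisfied when the trace condition below makes sense), such that Tr_{F_q/F_2}( (N^{q+1}+N^{q²+1}+N^{q²+q})(N+N^q+N^{q²}+N^{q+1}+N^{q²+1}+N^{q²+q}+N^{q²+q+1}+1) / (N^{q²+q+1}+N+N^q+N^{q²})² ) = 0, equals (q³ − q² − q − 2)/2. -/

import Mathlib

open Finset in
theorem aux_fib {G H : Type*} [AddGroup G] [Fintype G] [AddGroup H] [Fintype H] [DecidableEq H]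
    (f : G →+ H) (hf : Function.Surjective f) (x : H) :
    #{g | f g = x} * Fintype.card H = Fintype.card G := by
  have h := Finset.card_eq_sum_card_fiberwise (f := f) (s := (univ : Finset G))
    (t := (univ : Finset H)) (by simp)
  rw [← Finset.card_univ (α := G), h, Finset.sum_congr rfl
    (fun y _ => AddMonoidHom.card_fiber_eq_of_mem_range f (hf y) (hf x))]
  simp [mul_comm]

open Finset in
theorem aux_fibm {G H : Type*} [Group G] [Fintype G] [Group H] [Fintype H] [DecidableEq H]
    (f : G →* H) (hf : Function.Surjective f) (x : H) :
    #{g | f g = x} * Fintype.card H = Fintype.card G := by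
  have h := Finset.card_eq_sum_card_fiberwise (f := f) (s := (univ : Finset G))
    (t := (univ : Finset H)) (by simp)
  rw [← Finset.card_univ (α := G), h, Finset.sum_congr rfl
    (fun y _ => MonoidHom.card_fiber_eq_of_mem_range f (hf y) (hf x))]
  simp [mul_comm]

open Finset in
theorem aux_as (K : Type*) [Field K] [Fintype K] [Algebra (ZMod 2) K] (a : K) :
    Algebra.trace (ZMod 2) K a = 0 ↔ ∃ z : K, z ^ 2 + z = a := by
  classical
  have : CharP K 2 := charP_of_injective_algebraMap (algebraMap (ZMod 2) K).injective 2
  have h1 : ∀ z : K, Algebra.trace (ZMod 2) K (z ^ 2 + z) = 0 := by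
    intro z
    have := Algebra.trace_eq_of_algEquiv (FiniteField.frobeniusAlgEquivOfAlgebraic (ZMod 2) K) z
    simp [ZMod.card] at this
    rw [map_add, this]
    exact CharTwo.add_self_eq_zero _
  have h2 : #{g : K | Algebra.trace (ZMod 2) K g = 0} * 2 = Fintype.card K := by
    have h2 := aux_fib (Algebra.trace (ZMod 2) K).toAddMonoidHom
      (Algebra.trace_surjective (ZMod 2) K) 0
    rw [ZMod.card] at h2
    exact h2
  have h3 : #(univ : Finset K) ≤ 2 * #(image (fun z : K => z ^ 2 + z) univ) := by
    apply Finset.card_le_mul_card_image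
    intro b hb
    obtain ⟨z, -, rfl⟩ := Finset.mem_image.1 hb
    refine (Finset.card_le_card (t := {z, z + 1}) ?_).trans Finset.card_le_two
    intro y hy
    simp only [mem_filter, mem_univ, true_and] at hy
    have : (y - z) * (y + z + 1) = 0 := by linear_combination hy
    rcases mul_eq_zero.1 this with h | h
    · simp [sub_eq_zero.1 h]
    · have : y = z + 1 := by
        have h2 : (2 : K) = 0 := CharTwo.two_eq_zero
        linear_combination h - (z + 1) * h2
      simp [this]
  have h4 : image (fun z : K => z ^ 2 + z) univ = ({g | Algebra.trace (ZMod 2) K g = 0} : Finset K) := by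
    apply Finset.eq_of_subset_of_card_le
    · intro y hy
      obtain ⟨z, -, rfl⟩ := Finset.mem_image.1 hy
      simpa using h1 z
    · rw [Finset.card_univ, ← h2] at h3
      have h5 := Nat.le_of_mul_le_mul_left ((Nat.mul_comm _ _).le.trans h3) (by norm_num : 0 < 2)
      exact h5
  have := Finset.ext_iff.1 h4 a
  simpa using this.symm

/-- second symmetric function -/
noncomputable def auxS (K : Type*) {M : Type*} [Field K] [Field M] [Algebra K M] (N : M) : K :=
  Algebra.norm K N * Algebra.trace K M N⁻¹

section
variable {K M : Type*} [Field K] [Fintype K] [Field M] [Fintype M] [Algebra K M]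
  {q : ℕ} (hK : Fintype.card K = q) (hM : Fintype.card M = q ^ 3)
include hK hM

theorem aux_rank : Module.finrank K M = 3 := by
  have h := Module.card_eq_pow_finrank (K := K) (V := M)
  rw [hM, hK] at h
  have : 1 < q := hK ▸ Fintype.one_lt_card
  exact (Nat.pow_right_injective this h).symm

theorem aux_tr (N : M) : algebraMap K M (Algebra.trace K M N) = N + N ^ q + N ^ (q ^ 2) := by
  rw [FiniteField.algebraMap_trace_eq_sum_pow, aux_rank hK hM, Nat.card_eq_fintype_card, hK]
  simp [Finset.sum_range_succ]

theorem aux_nm (N : M) : algebraMap K M (Algebra.norm K N) = N * N ^ q * N ^ (q ^ 2) := by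
  rw [FiniteField.algebraMap_norm_eq_prod_pow, aux_rank hK hM, Nat.card_eq_fintype_card, hK]
  simp [Finset.prod_range_succ]

theorem aux_S (N : M) : algebraMap K M (auxS K N) =
    N * N ^ q + N * N ^ (q ^ 2) + N ^ q * N ^ (q ^ 2) := by
  have : 0 < q := hK ▸ Fintype.card_pos
  rw [auxS, map_mul, aux_nm hK hM, aux_tr hK hM]
  by_cases h : N = 0
  · subst h; simp [this.ne']
  · have a1 := pow_ne_zero q h
    have a2 := pow_ne_zero (q ^ 2) h
    rw [inv_pow, inv_pow]
    field_simp
    ring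

theorem aux_nadd (n : ℕ) (hn : q = 2 ^ n) [CharP M 2] (N : M) (w : K) :
    Algebra.norm K (N + algebraMap K M w) =
    Algebra.norm K N + w * auxS K N + w ^ 2 * Algebra.trace K M N + w ^ 3 := by
  apply (algebraMap K M).injective
  simp only [map_add, map_mul, map_pow]
  rw [aux_nm hK hM, aux_nm hK hM, aux_S hK hM, aux_tr hK hM]
  have e : w ^ q = w := hK ▸ FiniteField.pow_card w
  have e2 : w ^ (q ^ 2) = w := by rw [pow_two, pow_mul, e, e]
  have f : (N + algebraMap K M w) ^ q = N ^ q + algebraMap K M w := by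
    conv_rhs => rw [← e]
    rw [hn, add_pow_char_pow, map_pow]
  have f2 : (N + algebraMap K M w) ^ (q ^ 2) = N ^ (q ^ 2) + algebraMap K M w := by
    conv_rhs => rw [← e2]
    rw [hn, ← pow_mul, add_pow_char_pow, map_pow]
  rw [f, f2]
  ring

open Finset in
theorem aux_cT [DecidableEq K] (c : K) : #{N : M | Algebra.trace K M N = c} = q ^ 2 := by
  have h := aux_fib (Algebra.trace K M).toAddMonoidHom (Algebra.trace_surjective K M) c
  have : 0 < q := hK ▸ Fintype.card_pos
  rw [hK, hM, pow_succ] at h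
  exact Nat.eq_of_mul_eq_mul_right this h

open Finset in
theorem aux_cN [DecidableEq K] (c : K) (hc : c ≠ 0) :
    #{N : M | Algebra.norm K N = c} = q ^ 2 + q + 1 := by
  classical
  have h := aux_fibm (Units.map (Algebra.norm K (S := M))) (FiniteField.unitsMap_norm_surjective K M)
    (Units.mk0 c hc)
  have h1 : 1 < q := hK ▸ Fintype.one_lt_card
  rw [Fintype.card_units, Fintype.card_units, hK, hM] at h
  have e : #{N : M | Algebra.norm K N = c} =
      #{g : Mˣ | Units.map (Algebra.norm K (S := M)) g = Units.mk0 c hc} := by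
    symm
    apply Finset.card_bij (fun (g : Mˣ) _ => (g : M))
    · intro g hg
      simpa [Units.ext_iff] using hg
    · intro a _ b _ h; exact Units.ext h
    · intro b hb
      simp only [mem_filter, mem_univ, true_and] at hb
      have : b ≠ 0 := by
        rintro rfl
        simp at hb
        exact hc hb.symm
      exact ⟨Units.mk0 b this, by simp [Units.ext_iff, hb], rfl⟩
  rw [e]
  apply Nat.eq_of_mul_eq_mul_right (show 0 < q - 1 by omega)
  rw [h]
  obtain ⟨k, rfl⟩ := Nat.exists_eq_add_of_lt h1
  rw [Nat.sub_eq_iff_eq_add (Nat.one_le_pow _ _ (by omega))]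
  rw [show 1 + k + 1 - 1 = k + 1 by omega]
  ring

end

section
variable {K M : Type*} [Field K] [Fintype K] [Field M] [Fintype M] [Algebra K M]
  {q : ℕ} (hK : Fintype.card K = q) (hM : Fintype.card M = q ^ 3)

omit [Fintype K] in
theorem aux_norm0 (N : M) : Algebra.norm K N = 0 ↔ N = 0 := Algebra.norm_eq_zero_iff

open Finset in
include hK hM in
theorem aux_cS0 [DecidableEq K] : #{N : M | auxS K N = 0} = q ^ 2 := by
  rw [← aux_cT hK hM (0 : K)]
  apply Finset.card_bij (fun (g : M) _ => g⁻¹)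
  · intro g hg
    simp only [mem_filter, mem_univ, true_and] at hg ⊢
    simp only [auxS, mul_eq_zero, aux_norm0] at hg
    rcases hg with rfl | hg
    · simp
    · exact hg
  · intro a _ b _ h; exact inv_injective h
  · intro b hb
    simp only [mem_filter, mem_univ, true_and] at hb
    exact ⟨b⁻¹, by simp only [mem_filter, mem_univ, true_and]; simp [auxS, hb], by simp⟩

open Finset in
include hK hM in
theorem aux_cPS [DecidableEq K] : #{N : M | Algebra.norm K N = auxS K N} = q ^ 2 + 1 := by
  classical
  have e : ({N : M | Algebra.norm K N = auxS K N} : Finset M) =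
      insert 0 ({N : M | Algebra.trace K M N⁻¹ = 1} : Finset M) := by
    ext N
    simp only [mem_filter, mem_univ, true_and, mem_insert]
    simp only [auxS]
    by_cases h : N = 0
    · subst h; simp
    · have := (aux_norm0 (K := K) N).not.2 h
      simp only [h, false_or]
      rw [eq_comm, mul_eq_left₀ this]
  rw [e, Finset.card_insert_of_notMem (by simp), ← aux_cT hK hM (1 : K)]
  congr 1
  apply Finset.card_bij (fun (g : M) _ => g⁻¹)
  · intro g hg; simpa using hg
  · intro a _ b _ h; exact inv_injective h
  · intro b hb
    simp only [mem_filter, mem_univ, true_and] at hb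
    exact ⟨b⁻¹, by simp [hb], by simp⟩

open Finset in
include hK hM in
theorem aux_cPT [DecidableEq K] (n : ℕ) (hn : q = 2 ^ n) [CharP M 2] [CharP K 2] :
    #{N : M | Algebra.norm K N = Algebra.trace K M N} = q ^ 2 + 1 := by
  have h2 : (2 : K) = 0 := CharTwo.two_eq_zero
  have h2' : (2 : M) = 0 := CharTwo.two_eq_zero
  have key : ∀ N : M, Algebra.norm K (N + 1) = Algebra.trace K M (N + 1) ↔
      Algebra.norm K N = auxS K N := by
    intro N
    have h := aux_nadd hK hM n hn N (1 : K)
    have h1 : Algebra.trace K M (1 : M) = 1 := by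
      have := Algebra.trace_algebraMap (R := K) (S := M) (1 : K)
      rw [map_one, aux_rank hK hM] at this
      rw [this]
      simp only [nsmul_eq_mul, mul_one]
      push_cast
      linear_combination h2
    rw [map_one] at h
    rw [h, map_add, h1]
    constructor <;> intro h
    · linear_combination h - auxS K N * h2
    · linear_combination h + auxS K N * h2
  rw [← aux_cPS hK hM]
  apply Finset.card_bij (fun (g : M) _ => g + 1)
  · intro g hg
    simp only [mem_filter, mem_univ, true_and] at hg ⊢
    rw [← key]
    have : g + 1 + 1 = g := by linear_combination h2'
    rwa [this]
  · intro a _ b _ h; exact add_right_cancel h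
  · intro b hb
    simp only [mem_filter, mem_univ, true_and] at hb
    exact ⟨b + 1, by simpa using (key b).2 hb, by linear_combination h2'⟩

/-- the relation -/
def auxR (K : Type*) {M : Type*} [Field K] [Field M] [Algebra K M] (N : M) (w : K) : Prop :=
  w ^ 2 + (Algebra.norm K N + Algebra.trace K M N) * w + auxS K N = 0

open Finset in
include hK hM in
theorem aux_below [DecidableEq K] [DecidableRel (auxR K (M := M))] (n : ℕ) (hn : q = 2 ^ n)
    [CharP M 2] [CharP K 2] (w : K) :
    #{N : M | auxR K N w} = if w = 0 then q ^ 2 else if w = 1 then 1 else q ^ 2 + q + 1 := by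
  have h2 : (2 : K) = 0 := CharTwo.two_eq_zero
  have h2' : (2 : M) = 0 := CharTwo.two_eq_zero
  have key : ∀ N : M, w ≠ 0 → (auxR K N w ↔
      Algebra.norm K (N + algebraMap K M w) = (w ^ 2 + 1) * Algebra.norm K N) := by
    intro N hw
    rw [aux_nadd hK hM n hn, auxR]
    constructor <;> intro h
    · linear_combination w * h - w ^ 2 * Algebra.norm K N * h2
    · apply mul_left_cancel₀ hw
      linear_combination h + w ^ 2 * Algebra.norm K N * h2
  split_ifs with h0 h1
  · subst h0
    rw [← aux_cS0 hK hM]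
    congr 1
    ext N
    simp [auxR]
  · rw [Finset.card_eq_one]
    refine ⟨1, ?_⟩
    ext N
    have := key N h0
    subst h1
    simp only [mem_filter, mem_univ, true_and, mem_singleton]
    rw [this, show ((1 : K) ^ 2 + 1) = 0 by linear_combination h2, zero_mul, aux_norm0, map_one]
    constructor <;> intro h
    · linear_combination h - h2'
    · rw [h]; linear_combination h2'
  · have hc : w ^ 2 + 1 ≠ 0 := by
      intro h
      have : (w - 1) ^ 2 = 0 := by linear_combination h - w * h2
      exact h1 (sub_eq_zero.1 (pow_eq_zero_iff (by norm_num) |>.1 this))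
    have hW : algebraMap K M w ≠ 0 := by simpa using h0
    have hne : ∀ y : M, Algebra.norm K y = w ^ 2 + 1 → y + 1 ≠ 0 := by
      intro y hy h
      have : y = 1 := by linear_combination h - h2'
      rw [this, map_one] at hy
      have : w ^ 2 = 0 := by linear_combination - hy
      exact h0 (pow_eq_zero_iff (by norm_num) |>.1 this)
    rw [← aux_cN hK hM (w ^ 2 + 1) hc]
    symm
    apply Finset.card_bij (fun (y : M) _ => algebraMap K M w / (y + 1))
    · intro y hy
      simp only [mem_filter, mem_univ, true_and] at hy ⊢
      have hy1 := hne y hy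
      rw [key _ h0, ← hy, ← map_mul]
      congr 1
      field_simp
      linear_combination h2'
    · intro a ha b hb h
      simp only [mem_filter, mem_univ, true_and] at ha hb
      have ha1 := hne a ha
      have hb1 := hne b hb
      rw [div_eq_div_iff ha1 hb1] at h
      exact (add_right_cancel (mul_left_cancel₀ hW h)).symm
    · intro N hN
      simp only [mem_filter, mem_univ, true_and] at hN
      rw [key _ h0] at hN
      have hN0 : N ≠ 0 := by
        rintro rfl
        rw [zero_add, (aux_norm0 (K := K) (0 : M)).2 rfl, mul_zero, aux_norm0] at hN
        exact hW hN
      have hP := (aux_norm0 (K := K) N).not.2 hN0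
      refine ⟨1 + algebraMap K M w / N, ?_, ?_⟩
      · simp only [mem_filter, mem_univ, true_and]
        rw [show 1 + algebraMap K M w / N = (N + algebraMap K M w) / N by field_simp,
          ← mul_left_inj' hP, ← hN, ← map_mul, div_mul_cancel₀ _ hN0]
      · rw [show 1 + algebraMap K M w / N + 1 = algebraMap K M w / N by linear_combination h2']
        field_simp

open Finset in
theorem aux_above [DecidableEq K] [DecidableRel (auxR K (M := M))] [CharP K 2] (N : M) :
    #{w : K | auxR K N w} = (if Algebra.norm K N = Algebra.trace K M N then 1 else 0) +
      2 * (if Algebra.norm K N ≠ Algebra.trace K M N ∧ ∃ w, auxR K N w then 1 else 0) := by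
  classical
  have h2 : (2 : K) = 0 := CharTwo.two_eq_zero
  by_cases h : Algebra.norm K N = Algebra.trace K M N
  · simp only [h, if_true, ne_eq, not_true, false_and, if_false]
    obtain ⟨s, hs⟩ := surjective_frobenius K 2 (auxS K N)
    rw [frobenius_def] at hs
    rw [mul_zero, add_zero, Finset.card_eq_one]
    refine ⟨s, ?_⟩
    ext v
    simp only [mem_filter, mem_univ, true_and, mem_singleton]
    rw [auxR, h, ← hs]
    constructor
    · intro hv
      have : (v - s) ^ 2 = 0 := by
        linear_combination hv - (v * s + Algebra.trace K M N * v) * h2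
      exact sub_eq_zero.1 (pow_eq_zero_iff (by norm_num) |>.1 this)
    · rintro rfl
      linear_combination (v ^ 2 + Algebra.trace K M N * v) * h2
  · simp only [h, if_false, ne_eq, not_false_iff, true_and, zero_add]
    split_ifs with hw
    · obtain ⟨w, hw⟩ := hw
      rw [mul_one, Finset.card_eq_two]
      set t := Algebra.norm K N + Algebra.trace K M N with ht
      have ht0 : t ≠ 0 := by
        intro h0
        exact h (by linear_combination h0 - Algebra.trace K M N * h2)
      refine ⟨w, w + t, by simpa using ht0, ?_⟩
      ext v
      simp only [mem_filter, mem_univ, true_and, mem_insert, mem_singleton]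
      rw [auxR, ← ht] at hw ⊢
      constructor
      · intro hv
        have : (v - w) * (v - (w + t)) = 0 := by
          linear_combination hv - hw - (v * w + v * t) * h2 + w * (w + t) * h2
        rcases mul_eq_zero.1 this with h | h
        · exact Or.inl (sub_eq_zero.1 h)
        · exact Or.inr (sub_eq_zero.1 h)
      · rintro (rfl | rfl)
        · exact hw
        · linear_combination hw + (w * t + t ^ 2) * h2
    · rw [mul_zero, Finset.card_eq_zero]
      ext v
      simpa using fun h => hw ⟨v, h⟩

open Finset in
include hK hM in
theorem aux_main [DecidableEq K] [DecidableRel (auxR K (M := M))] (n : ℕ) (hn : q = 2 ^ n)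
    [CharP M 2] [CharP K 2] :
    #{N : M | Algebra.norm K N ≠ Algebra.trace K M N ∧ ∃ w, auxR K N w} =
      (q ^ 3 - q ^ 2 - q - 2) / 2 := by
  have h := Finset.sum_card_bipartiteAbove_eq_sum_card_bipartiteBelow (auxR K (M := M))
    (s := univ) (t := univ)
  simp only [bipartiteAbove, bipartiteBelow] at h
  simp only [aux_above, aux_below hK hM n hn] at h
  rw [Finset.sum_add_distrib, ← Finset.mul_sum, ← Finset.card_filter, ← Finset.card_filter,
    aux_cPT hK hM n hn] at h
  have e : ∑ w : K, (if w = 0 then q ^ 2 else if w = 1 then 1 else q ^ 2 + q + 1) =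
      q ^ 2 + (1 + (q - 2) * (q ^ 2 + q + 1)) := by
    have hc : #((univ.erase (0 : K)).erase 1) = q - 2 := by
      rw [Finset.card_erase_of_mem (by simp), Finset.card_erase_of_mem (by simp),
        Finset.card_univ, hK]
      omega
    rw [← Finset.add_sum_erase univ _ (mem_univ (0 : K)),
      ← Finset.add_sum_erase (univ.erase (0 : K)) _ (show (1 : K) ∈ _ by simp),
      Finset.sum_congr rfl (g := fun _ => q ^ 2 + q + 1), Finset.sum_const, hc]
    · simp
    · intro x hx
      simp only [mem_erase, mem_univ, and_true] at hx
      simp [hx.1, hx.2]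
  rw [e] at h
  have h1 : 1 < q := hK ▸ Fintype.one_lt_card
  obtain ⟨k, rfl⟩ := Nat.exists_eq_add_of_lt h1
  rw [show 1 + k + 1 - 2 = k by omega] at h
  have e3 : (1 + k + 1) ^ 3 = k * ((1 + k + 1) ^ 2 + (1 + k + 1) + 1) + (1 + k + 1) ^ 2 + (1 + k + 1) + 2 := by ring
  rw [e3]
  generalize k * ((1 + k + 1) ^ 2 + (1 + k + 1) + 1) = X at *
  generalize (1 + k + 1) ^ 2 = Y at *
  omega
end

theorem stmt16 (n q : ℕ) (hn : 0 < n) (hq : q = 2 ^ n)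
    (K M : Type*) [Field K] [Fintype K] [Field M] [Fintype M] [Algebra K M]
    [Algebra (ZMod 2) K] (hK : Fintype.card K = q) (hM : Fintype.card M = q ^ 3) :
    Nat.card {N : M | N ≠ 0 ∧ N ≠ 1 ∧
      N ^ (q ^ 2 + q + 1) + N + N ^ q + N ^ (q ^ 2) ≠ 0 ∧
      ∃ a : K, algebraMap K M a =
          (N ^ (q + 1) + N ^ (q ^ 2 + 1) + N ^ (q ^ 2 + q)) *
            (N + N ^ q + N ^ (q ^ 2) + N ^ (q + 1) + N ^ (q ^ 2 + 1) +
              N ^ (q ^ 2 + q) + N ^ (q ^ 2 + q + 1) + 1) /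
            (N ^ (q ^ 2 + q + 1) + N + N ^ q + N ^ (q ^ 2)) ^ 2 ∧
        Algebra.trace (ZMod 2) K a = 0} =
      (q ^ 3 - q ^ 2 - q - 2) / 2 := by
  classical
  have : CharP K 2 := charP_of_injective_algebraMap (algebraMap (ZMod 2) K).injective 2
  have : CharP M 2 := charP_of_injective_algebraMap (algebraMap K M).injective 2
  have h2 : (2 : K) = 0 := CharTwo.two_eq_zero
  have h2' : (2 : M) = 0 := CharTwo.two_eq_zero
  have hq0 : q ≠ 0 := by rw [hq]; positivity
  rw [← aux_main hK hM n hq, Nat.card_eq_fintype_card, Fintype.card_subtype]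
  congr 1
  ext N
  simp only [Finset.mem_filter, Finset.mem_univ, true_and, Set.mem_ofPred_eq]
  have hT := aux_tr hK hM N
  have hP := aux_nm hK hM N
  have hS := aux_S hK hM N
  have hD : N ^ (q ^ 2 + q + 1) + N + N ^ q + N ^ (q ^ 2) =
      algebraMap K M (Algebra.norm K N + Algebra.trace K M N) := by
    rw [map_add, hT, hP]; ring
  have hA : (N ^ (q + 1) + N ^ (q ^ 2 + 1) + N ^ (q ^ 2 + q)) *
            (N + N ^ q + N ^ (q ^ 2) + N ^ (q + 1) + N ^ (q ^ 2 + 1) +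
              N ^ (q ^ 2 + q) + N ^ (q ^ 2 + q + 1) + 1) /
            (N ^ (q ^ 2 + q + 1) + N + N ^ q + N ^ (q ^ 2)) ^ 2 =
      algebraMap K M (auxS K N * (Algebra.trace K M N + auxS K N + Algebra.norm K N + 1) /
        (Algebra.norm K N + Algebra.trace K M N) ^ 2) := by
    rw [hD]
    simp only [map_div₀, map_mul, map_add, map_pow, map_one]
    rw [hT, hP, hS]
    ring
  rw [hA, hD]
  have hD0 : algebraMap K M (Algebra.norm K N + Algebra.trace K M N) ≠ 0 ↔
      Algebra.norm K N ≠ Algebra.trace K M N := by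
    rw [map_ne_zero, ne_eq, CharTwo.add_eq_zero]
  rw [hD0]
  have hB : Algebra.norm K N ≠ Algebra.trace K M N → N ≠ 0 ∧ N ≠ 1 := by
    intro h
    constructor
    · rintro rfl
      exact h (by rw [(aux_norm0 (K := K) (0 : M)).2 rfl, map_zero])
    · rintro rfl
      apply hD0.2 h
      rw [← hD]
      simp only [one_pow]
      linear_combination 2 * h2'
  have hC : Algebra.norm K N ≠ Algebra.trace K M N → ((∃ a : K, algebraMap K M a =
      algebraMap K M (auxS K N * (Algebra.trace K M N + auxS K N + Algebra.norm K N + 1) /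
        (Algebra.norm K N + Algebra.trace K M N) ^ 2) ∧ Algebra.trace (ZMod 2) K a = 0) ↔
      ∃ w, auxR K N w) := by
    intro h
    rw [← hD0, map_ne_zero] at h
    simp only [(algebraMap K M).injective.eq_iff, exists_eq_left, aux_as, auxR]
    generalize Algebra.norm K N = P at *
    generalize Algebra.trace K M N = T at *
    generalize auxS K N = S at *
    constructor
    · rintro ⟨z, hz⟩
      refine ⟨z * (P + T) + S, ?_⟩
      rw [eq_div_iff (pow_ne_zero 2 h)] at hz
      linear_combination hz + (S * z * (P + T) + S ^ 2 + S * P + S * T + S) * h2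
    · rintro ⟨w, hw⟩
      refine ⟨(w + S) / (P + T), ?_⟩
      field_simp
      linear_combination hw + (w * S) * h2 - S * h2
  constructor
  · rintro ⟨-, -, h, h'⟩
    exact ⟨h, (hC h).1 h'⟩
  · rintro ⟨h, h'⟩
    exact ⟨(hB h).1, (hB h).2, h, (hC h).2 h'⟩
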